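/- arXiv:1509.09160 — 10 statements merged into one kernel-verified Lean document; each statement's English description precedes it below -/
import Mathlib

section
/- For every natural number k and every natural number s with 0 ≤ s ≤ k, define K(k,s) = (1/(k+1)) · Σ_{n=0}^{k} C(k+1,n) · B*_n · Σ_{j=0}^{n} (−1)^j · C(n,j) · N(k,n,j,s), where N(k,n,j,s) ∈ {0,1} is the number of integers ℓ with 0 ≤ ℓ ≤ k−n and ℓ + j = s. Then K(k,0) = 1, and K(k,s) = 0 for every s with 1 ≤ s ≤ k. -/
/-- `K k s` from the Gutt star product computation:
`K(k,s) = (1/(k+1)) · Σ_{n=0}^{k} C(k+1,n) · B*_n · Σ_{j=0}^{n} (−1)^j · C(n,j) · N(k,n,j,s)`,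
where `N(k,n,j,s)` is the number of `ℓ` with `0 ≤ ℓ ≤ k−n` and `ℓ + j = s`. -/
def guttK (k s : ℕ) : ℚ :=
  (1 / (k + 1 : ℚ)) * ∑ n ∈ Finset.range (k + 1),
    ((k + 1).choose n : ℚ) * bernoulli' n *
      ∑ j ∈ Finset.range (n + 1),
        (-1 : ℚ) ^ j * (n.choose j : ℚ) *
          ((((Finset.range (k - n + 1)).filter (fun ℓ => ℓ + j = s)).card : ℕ) : ℚ)

open Polynomial in
lemma gutt_egf (k : ℕ) :
    ∑ n ∈ Finset.range (k + 2), ((k + 1).choose n : ℚ[X]) * C (bernoulli' n) * (1 - X) ^ n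
      * (1 - X ^ (k + 1 - n)) = (k + 1 : ℚ[X]) * (1 - X) := by
  have h := congrArg (PowerSeries.rescale (1 - X : ℚ[X])) (bernoulli'PowerSeries_mul_exp_sub_one ℚ[X])
  have e : PowerSeries.rescale (1 - X : ℚ[X]) (PowerSeries.exp ℚ[X]) *
      PowerSeries.rescale (X : ℚ[X]) (PowerSeries.exp ℚ[X]) = PowerSeries.exp ℚ[X] := by
    rw [PowerSeries.exp_mul_exp_eq_exp_add]; simp
  have h2 : PowerSeries.rescale (1 - X : ℚ[X]) (bernoulli'PowerSeries ℚ[X]) *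
      (PowerSeries.exp ℚ[X] - PowerSeries.rescale (X : ℚ[X]) (PowerSeries.exp ℚ[X]))
      = PowerSeries.C (1 - X : ℚ[X]) * (PowerSeries.X * PowerSeries.exp ℚ[X]) := by
    simp only [map_mul, map_sub, map_one, PowerSeries.rescale_X] at h
    simp only [map_sub, map_one]
    linear_combination (PowerSeries.rescale (X : ℚ[X]) (PowerSeries.exp ℚ[X])) * h +
      ((1 - PowerSeries.C X) * PowerSeries.X - PowerSeries.rescale (1 - X : ℚ[X]) (bernoulli'PowerSeries ℚ[X])) * e
  have h3 := congrArg (PowerSeries.coeff (k + 1)) h2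
  rw [PowerSeries.coeff_mul, PowerSeries.coeff_C_mul, PowerSeries.coeff_succ_X_mul,
    Finset.Nat.sum_antidiagonal_eq_sum_range_succ_mk] at h3
  have h4 := congrArg (fun p => C (((k + 1).factorial : ℕ) : ℚ) * p) h3
  simp only [Finset.mul_sum] at h4
  have hk : (k.factorial : ℚ) ≠ 0 := by positivity
  convert h4 using 1
  · apply Finset.sum_congr rfl
    intro n hn
    have hn' : n ≤ k + 1 := by simpa [Nat.lt_succ_iff] using hn
    simp only [bernoulli'PowerSeries, PowerSeries.coeff_rescale, PowerSeries.coeff_mk, map_sub,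
      PowerSeries.coeff_exp, Polynomial.algebraMap_eq]
    have : ((k + 1).choose n : ℚ[X]) * C (bernoulli' n) =
        C ((k + 1).factorial : ℚ) * C (bernoulli' n / n.factorial) *
          C (1 / ((k + 1 - n).factorial : ℚ)) := by
      rw [← C_eq_natCast, ← C_mul, ← C_mul, ← C_mul, Nat.cast_choose ℚ hn']
      congr 1
      field_simp
    rw [this]; ring
  · simp only [PowerSeries.coeff_exp, Polynomial.algebraMap_eq]
    have : (k + 1 : ℚ[X]) = C ((k + 1).factorial : ℚ) * C (1 / (k.factorial : ℚ)) := by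
      rw [← C_mul, Nat.factorial_succ]
      push_cast
      rw [mul_one_div, mul_div_cancel_right₀ _ hk]; simp
    rw [this]; ring

open Polynomial in
lemma gutt_poly (k : ℕ) :
    ∑ n ∈ Finset.range (k + 1), C (((k + 1).choose n : ℚ) * bernoulli' n) * ((1 - X) ^ n
      * ∑ l ∈ Finset.range (k - n + 1), X ^ l) = C (k + 1 : ℚ) := by
  have h := gutt_egf k
  rw [Finset.sum_range_succ] at h
  have h1 : (1 - X : ℚ[X]) ≠ 0 := by
    intro h0
    have := congrArg (Polynomial.eval 0) h0
    simp at this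
  apply mul_right_cancel₀ h1
  simp only [Nat.sub_self, pow_zero, sub_self, mul_zero, add_zero] at h
  rw [Finset.sum_mul]
  simp only [map_add, map_natCast, map_one]
  rw [← h]
  apply Finset.sum_congr rfl
  intro n hn
  have hn' : n ≤ k := by simpa [Nat.lt_succ_iff] using hn
  have : k + 1 - n = k - n + 1 := by omega
  rw [this, ← geom_sum_mul_neg]
  simp only [map_mul, map_natCast]
  ring

open Polynomial in
lemma gutt_coeff (n m s : ℕ) :
    ((1 - X : ℚ[X]) ^ n * ∑ l ∈ Finset.range m, X ^ l).coeff s =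
      ∑ j ∈ Finset.range (n + 1), (-1 : ℚ) ^ j * (n.choose j : ℚ) *
          ((((Finset.range m).filter (fun l => l + j = s)).card : ℕ) : ℚ) := by
  have : (1 - X : ℚ[X]) ^ n = ∑ j ∈ Finset.range (n + 1), C ((-1 : ℚ) ^ j * (n.choose j : ℚ)) * X ^ j := by
    rw [sub_eq_neg_add, add_pow]
    apply Finset.sum_congr rfl
    intro j _
    rw [neg_pow]
    simp
    ring
  rw [this, Finset.sum_mul, finsetSum_coeff]
  apply Finset.sum_congr rfl
  intro j _
  rw [mul_assoc, coeff_C_mul, Finset.mul_sum, finsetSum_coeff, Finset.card_filter]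
  push_cast
  congr 1
  apply Finset.sum_congr rfl
  intro l _
  rw [← pow_add, coeff_X_pow]
  simp [eq_comm, add_comm]

lemma guttK_eq (k s : ℕ) : guttK k s = if s = 0 then 1 else 0 := by
  have h := congrArg (fun p => Polynomial.coeff p s) (gutt_poly k)
  simp only [Polynomial.finsetSum_coeff, Polynomial.coeff_C_mul, gutt_coeff,
    Polynomial.coeff_C] at h
  have hk : (k + 1 : ℚ) ≠ 0 := by positivity
  unfold guttK
  rw [h]
  split_ifs
  · field_simp
  · simp

theorem stmt0 (k : ℕ) :
    guttK k 0 = 1 ∧ ∀ s : ℕ, 1 ≤ s → s ≤ k → guttK k s = 0 := by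
  refine ⟨by simp [guttK_eq], fun s hs _ => ?_⟩
  rw [guttK_eq, if_neg (by omega)]
end

section
/- (Carlitz's identity) For all natural numbers k and m, (−1)^k · Σ_{j=0}^{k} C(k,j) · B_{m+j} = (−1)^m · Σ_{i=0}^{m} C(m,i) · B_{k+i}. -/
theorem carlitz_pascal (k : ℕ) (f : ℕ → ℚ) :
    ∑ j ∈ Finset.range (k + 1 + 1), ((k + 1).choose j : ℚ) * f j
      = ∑ j ∈ Finset.range (k + 1), (k.choose j : ℚ) * f j
        + ∑ j ∈ Finset.range (k + 1), (k.choose j : ℚ) * f (j + 1) := by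
  have h : ∑ j ∈ Finset.range (k + 1), (k.choose j : ℚ) * f j
      = ∑ j ∈ Finset.range (k + 1 + 1), (k.choose j : ℚ) * f j := by
    rw [Finset.sum_range_succ _ (k + 1)]
    simp
  rw [h, Finset.sum_range_succ' _ (k + 1), Finset.sum_range_succ' _ (k + 1)]
  simp only [Nat.choose_succ_succ', Nat.cast_add, add_mul, Finset.sum_add_distrib,
    Nat.choose_zero_right]
  ring

theorem carlitz_base (k : ℕ) :
    (-1 : ℚ) ^ k * ∑ j ∈ Finset.range (k + 1), (k.choose j : ℚ) * bernoulli j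
      = bernoulli k := by
  rw [Finset.sum_range_succ, sum_bernoulli]
  by_cases h : k = 1
  · subst h
    norm_num [bernoulli_one]
  · have h1 := bernoulli_eq_bernoulli'_of_ne_one h
    rw [bernoulli'_eq_bernoulli] at h1
    simp only [h, if_false, Nat.choose_self, Nat.cast_one, one_mul, zero_add]
    exact h1.symm

/-- Carlitz's identity for ordinary Bernoulli numbers (with `B₁ = −1/2`):
`(−1)^k Σ_{j=0}^{k} C(k,j) B_{m+j} = (−1)^m Σ_{i=0}^{m} C(m,i) B_{k+i}`. -/
theorem stmt1 (k m : ℕ) :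
    (-1 : ℚ) ^ k * ∑ j ∈ Finset.range (k + 1), (k.choose j : ℚ) * bernoulli (m + j)
      = (-1 : ℚ) ^ m * ∑ i ∈ Finset.range (m + 1), (m.choose i : ℚ) * bernoulli (k + i) := by
  induction k generalizing m with
  | zero =>
    simp only [zero_add]
    rw [carlitz_base]
    simp
  | succ k ih =>
    have h1 := ih m
    have h2 := ih (m + 1)
    rw [carlitz_pascal m (fun i => bernoulli (k + i))] at h2
    rw [carlitz_pascal k (fun i => bernoulli (m + i))]
    have e1 : ∀ a b : ℕ, a + 1 + b = a + (b + 1) := fun a b => by ring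
    simp only [e1] at h1 h2 ⊢
    rw [pow_succ] at h2 ⊢
    linear_combination -h1 - h2
end

section
/- Let A be an associative unital algebra over ℚ (or over a field of characteristic zero), let x, y ∈ A, and write (ad x)(w) = x·w − w·x. Then for every natural number k: Σ_{n=0}^{k} C(k,n) · B*_n · (1/(k−n+1)) · Σ_{ℓ=0}^{k−n} x^{k−n−ℓ} · ((ad x)^n y) · x^ℓ = x^k · y. (This is the algebraic content of the Gutt star-product formula ξ^k ⋆ η = Σ_{j=0}^{k} C(k,j) B*_j ξ^{k−j} (ad_ξ)^j(η), transported to the universal enveloping algebra via the symmetrization PBW map.) -/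
theorem aux_h {S : Type*} [Ring S] (b d : S) (h : Commute b d) (m : ℕ) :
    ∑ l ∈ Finset.range (m + 1), (b + d) ^ (m - l) * b ^ l
      = ∑ j ∈ Finset.range (m + 1), (b ^ (m - j) * d ^ j) * ((m + 1).choose (j + 1) : S) := by
  induction m with
  | zero => simp
  | succ m ih =>
    have hL : ∑ l ∈ Finset.range (m + 1 + 1), (b + d) ^ (m + 1 - l) * b ^ l
        = b * (∑ l ∈ Finset.range (m + 1), (b + d) ^ (m - l) * b ^ l) + (b + d) ^ (m + 1) := by
      rw [Finset.sum_range_succ', Finset.mul_sum]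
      simp only [Nat.add_sub_add_right, Nat.sub_zero, pow_zero, mul_one]
      congr 1
      refine Finset.sum_congr rfl fun l _ => ?_
      have hc : Commute b ((b + d) ^ (m - l)) := ((Commute.refl b).add_right h).pow_right _
      rw [← mul_assoc, hc.eq, mul_assoc, pow_succ']
    have hR : ∑ j ∈ Finset.range (m + 1 + 1),
          (b ^ (m + 1 - j) * d ^ j) * ((m + 1 + 1).choose (j + 1) : S)
        = b * (∑ j ∈ Finset.range (m + 1), (b ^ (m - j) * d ^ j) * ((m + 1).choose (j + 1) : S))
          + (b + d) ^ (m + 1) := by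
      rw [add_comm b d, h.symm.add_pow]
      simp only [Nat.choose_succ_succ (m + 1), Nat.cast_add, mul_add, Finset.sum_add_distrib]
      rw [add_comm]
      congr 1
      · rw [Finset.sum_range_succ, Finset.mul_sum]
        simp only [Nat.choose_succ_self, Nat.cast_zero, mul_zero, add_zero]
        refine Finset.sum_congr rfl fun j hj => ?_
        have hj' : m + 1 - j = (m - j) + 1 := by
          have := Finset.mem_range.mp hj
          omega
        simp only [Nat.succ_eq_add_one]
        rw [hj', pow_succ']
        simp only [mul_assoc]
      · refine Finset.sum_congr rfl fun j _ => ?_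
        rw [(h.pow_pow (m + 1 - j) j).eq]
    rw [hL, hR, ih]

theorem aux_coef (s : ℕ) :
    ∑ n ∈ Finset.range (s + 1), (s.choose n : ℚ) * bernoulli' n / ((s - n : ℕ) + 1 : ℚ) = 1 := by
  refine Eq.trans ?_ (bernoulli'_spec s)
  refine Finset.sum_congr rfl fun n hn => ?_
  have hn' : n ≤ s := Nat.lt_succ_iff.mp (Finset.mem_range.mp hn)
  rw [Nat.choose_symm hn', Nat.cast_sub hn']
  ring

theorem aux_choose (k n j : ℕ) (hnj : n + j ≤ k) :
    (k.choose n : ℚ) * bernoulli' n * (1 / ((k - n + 1 : ℕ) : ℚ)) * ((k - n + 1).choose (j + 1) : ℚ)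
      = (k.choose (n + j) : ℚ) * (((n + j).choose n : ℚ) * bernoulli' n / ((j : ℚ) + 1)) := by
  have h1 : ((k - n + 1 : ℕ) : ℚ) * ((k - n).choose j : ℚ)
      = ((k - n + 1).choose (j + 1) : ℚ) * ((j : ℚ) + 1) := by
    exact_mod_cast Nat.add_one_mul_choose_eq (k - n) j
  have h2 : (k.choose (n + j) : ℚ) * ((n + j).choose n : ℚ)
      = (k.choose n : ℚ) * ((k - n).choose j : ℚ) := by
    have := Nat.choose_mul (n := k) (k := n + j) (s := n) (by omega)
    rw [Nat.add_sub_cancel_left] at this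
    exact_mod_cast this
  have h3 : ((k - n + 1 : ℕ) : ℚ) ≠ 0 := by positivity
  have h4 : (j : ℚ) + 1 ≠ 0 := by positivity
  generalize ((k - n + 1 : ℕ) : ℚ) = M at *
  field_simp
  linear_combination (-(k.choose n : ℚ) * bernoulli' n) * h1 - M * bernoulli' n * h2

theorem aux_main {S : Type*} [Ring S] [Algebra ℚ S] (b d : S) (h : Commute b d) (k : ℕ) :
    ∑ n ∈ Finset.range (k + 1),
      ((k.choose n : ℚ) * bernoulli' n * (1 / ((k - n + 1 : ℕ) : ℚ))) •
        ((∑ l ∈ Finset.range (k - n + 1), (b + d) ^ (k - n - l) * b ^ l) * d ^ n)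
      = (b + d) ^ k := by
  let f : ℕ → ℕ → S := fun n j =>
    ((k.choose (n + j) : ℚ) * (((n + j).choose n : ℚ) * bernoulli' n / ((j : ℚ) + 1))) •
      (b ^ (k - (n + j)) * d ^ (n + j))
  have h1 : ∀ n ∈ Finset.range (k + 1),
      ((k.choose n : ℚ) * bernoulli' n * (1 / ((k - n + 1 : ℕ) : ℚ))) •
        ((∑ l ∈ Finset.range (k - n + 1), (b + d) ^ (k - n - l) * b ^ l) * d ^ n)
      = ∑ j ∈ Finset.range (k + 1 - n), f n j := by
    intro n hn
    have hn' : n ≤ k := Nat.lt_succ_iff.mp (Finset.mem_range.mp hn)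
    rw [aux_h b d h, Finset.sum_mul, Finset.smul_sum, Nat.sub_add_comm hn']
    refine Finset.sum_congr rfl fun j hj => ?_
    have hj' := Finset.mem_range.mp hj
    simp only [f]
    rw [← aux_choose k n j (by omega), mul_smul _ (((k - n + 1).choose (j + 1) : ℕ) : ℚ)]
    congr 1
    rw [← Nat.cast_comm, mul_assoc, mul_assoc, ← pow_add, add_comm j n, Nat.sub_sub,
      Nat.cast_smul_eq_nsmul, nsmul_eq_mul]
  rw [Finset.sum_congr rfl h1, ← Finset.sum_range_diag_flip, add_comm b d, h.symm.add_pow]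
  refine Finset.sum_congr rfl fun s _ => ?_
  have h2 : ∀ n ∈ Finset.range (s + 1), f n (s - n) =
      ((s.choose n : ℚ) * bernoulli' n / ((s - n : ℕ) + 1 : ℚ)) •
        ((k.choose s : ℚ) • (b ^ (k - s) * d ^ s)) := by
    intro n hn
    have hn' : n ≤ s := Nat.lt_succ_iff.mp (Finset.mem_range.mp hn)
    simp only [f]
    rw [Nat.add_sub_cancel' hn', smul_smul, mul_comm]
  rw [Finset.sum_congr rfl h2, ← Finset.sum_smul, aux_coef, one_smul,
    Nat.cast_smul_eq_nsmul, nsmul_eq_mul, Nat.cast_comm, (h.pow_pow (k - s) s).eq]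


/-- The algebraic content of the Gutt star-product formula
`ξ^k ⋆ η = Σ_{j=0}^{k} C(k,j) B*_j ξ^{k−j} (ad_ξ)^j(η)` transported to an associative
unital `ℚ`-algebra via the symmetrization PBW map:
`Σ_{n=0}^{k} C(k,n) B*_n (1/(k−n+1)) Σ_{ℓ=0}^{k−n} x^{k−n−ℓ} ((ad x)^n y) x^ℓ = x^k y`. -/
theorem stmt2 (A : Type*) [Ring A] [Algebra ℚ A] (x y : A) (k : ℕ) :
    ∑ n ∈ Finset.range (k + 1),
      ((k.choose n : ℚ) * bernoulli' n * (1 / ((k - n + 1 : ℕ) : ℚ))) •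
        ∑ ℓ ∈ Finset.range (k - n + 1),
          x ^ (k - n - ℓ) * ((fun w => x * w - w * x)^[n] y) * x ^ ℓ
      = x ^ k * y := by
  let L : Module.End ℚ A := LinearMap.mulLeft ℚ x
  let R : Module.End ℚ A := LinearMap.mulRight ℚ x
  have hLR : Commute R L := (LinearMap.commute_mulLeft_right x x).symm
  have h : Commute R (L - R) := hLR.sub_right (Commute.refl R)
  have key := congrArg (fun T : Module.End ℚ A => T y) (aux_main R (L - R) h k)
  have e : R + (L - R) = L := by abel
  have hL : ∀ (p : ℕ) (w : A), (L ^ p) w = x ^ p * w := by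
    intro p w
    simp only [L, LinearMap.pow_mulLeft, LinearMap.mulLeft_apply]
  have hR : ∀ (p : ℕ) (w : A), (R ^ p) w = w * x ^ p := by
    intro p w
    simp only [R, LinearMap.pow_mulRight, LinearMap.mulRight_apply]
  have hD : ∀ n : ℕ, ((L - R) ^ n) y = (fun w => x * w - w * x)^[n] y := by
    intro n
    rw [Module.End.pow_apply]
    rfl
  simp only [e, LinearMap.sum_apply, LinearMap.smul_apply, Module.End.mul_apply, hL, hR, hD] at key
  rw [← key]
  simp only [mul_assoc]
end

section
/- For every natural number n, the absolute value of the n-th Bernoulli number B*_n satisfies |B*_n| ≤ n!. -/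
theorem aux_sum_inv_factorial (m : ℕ) :
    ∑ j ∈ Finset.range m, (1 : ℚ) / ((j + 2).factorial : ℚ) ≤ 1 - 1 / ((m + 1).factorial : ℚ) := by
  induction m with
  | zero => simp
  | succ m ih =>
    rw [Finset.sum_range_succ]
    have h : (1 : ℚ) / ((m + 1).factorial : ℚ) = (m + 2) * (1 / ((m + 2).factorial : ℚ)) := by
      rw [Nat.factorial_succ (m + 1)]
      have : ((m + 1).factorial : ℚ) ≠ 0 := by positivity
      push_cast
      field_simp
      ring
    have h2 : (0 : ℚ) ≤ m * (1 / ((m + 2).factorial : ℚ)) := by positivity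
    have h3 : m + 1 + 1 = m + 2 := rfl
    rw [h3]
    linarith

theorem aux_bernoulli (n : ℕ) : |bernoulli n| ≤ (n.factorial : ℚ) := by
  induction n using Nat.strong_induction_on with
  | _ n ih =>
  rcases Nat.eq_zero_or_pos n with rfl | hn
  · simp
  have hs := sum_bernoulli (n + 1)
  rw [if_neg (by omega), Finset.sum_range_succ, Nat.choose_succ_self_right] at hs
  have h1 : ((n + 1 : ℕ) : ℚ) * |bernoulli n| ≤ ((n + 1).factorial : ℚ) := by
    have e : ((n + 1 : ℕ) : ℚ) * |bernoulli n|
        = |∑ k ∈ Finset.range n, ((n + 1).choose k : ℚ) * bernoulli k| := by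
      rw [eq_neg_of_add_eq_zero_left hs, abs_neg, abs_mul, Nat.abs_cast]
    rw [e]
    calc _ ≤ ∑ k ∈ Finset.range n, |((n + 1).choose k : ℚ) * bernoulli k| :=
          Finset.abs_sum_le_sum_abs _ _
      _ ≤ ∑ k ∈ Finset.range n, ((n + 1).factorial : ℚ) * (1 / ((n - 1 - k + 2).factorial : ℚ)) := by
          apply Finset.sum_le_sum
          intro k hk
          have hk' := Finset.mem_range.mp hk
          rw [abs_mul, Nat.abs_cast]
          have h := Nat.choose_mul_factorial_mul_factorial (n := n + 1) (k := k) (by omega)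
          have e2 : n + 1 - k = n - 1 - k + 2 := by omega
          rw [e2] at h
          rw [← h]
          have : ((n - 1 - k + 2).factorial : ℚ) ≠ 0 := by positivity
          push_cast
          rw [mul_one_div, mul_div_cancel_right₀ _ this]
          exact mul_le_mul_of_nonneg_left (ih k hk') (by positivity)
      _ = ((n + 1).factorial : ℚ) * ∑ j ∈ Finset.range n, (1 / ((j + 2).factorial : ℚ)) := by
          rw [← Finset.mul_sum,
            Finset.sum_range_reflect (fun j => (1 : ℚ) / ((j + 2).factorial : ℚ)) n]
      _ ≤ ((n + 1).factorial : ℚ) * 1 := by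
          apply mul_le_mul_of_nonneg_left _ (by positivity)
          have h := aux_sum_inv_factorial n
          have : (0 : ℚ) ≤ 1 / ((n + 1).factorial : ℚ) := by positivity
          linarith
      _ = _ := mul_one _
  rw [Nat.factorial_succ, Nat.cast_mul] at h1
  exact le_of_mul_le_mul_left h1 (by positivity)

/-- For every `n`, the Bernoulli number `B*_n` (with `B*_1 = +1/2`) satisfies `|B*_n| ≤ n!`. -/
theorem stmt4 (n : ℕ) : |bernoulli' n| ≤ (n.factorial : ℚ) := by
  rw [bernoulli'_eq_bernoulli, abs_mul, abs_pow, abs_neg, abs_one, one_pow, one_mul]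
  exact aux_bernoulli n
end

section
/- For every real number z with |z| < 2π, the series Σ_{n=0}^{∞} |B*_n| · |z|^n / n! converges (i.e., the function n ↦ |B*_n|·|z|^n/n! is summable). -/
theorem stmt5_aux (k : ℕ) (hk : k ≠ 0) :
    (2 * Real.pi) ^ (2 * k) * (|((bernoulli' (2 * k) : ℚ) : ℝ)| / ((2 * k).factorial : ℝ))
      ≤ Real.pi ^ 2 / 3 := by
  have h := hasSum_zeta_nat hk
  have h2 := hasSum_zeta_two
  have hle := hasSum_le (fun n : ℕ => by
    rcases Nat.eq_zero_or_pos n with rfl | hn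
    · simp [hk]
    · have h1 : (1 : ℝ) ≤ n := by exact_mod_cast hn
      exact one_div_le_one_div_of_le (by positivity)
        (pow_le_pow_right₀ h1 (by omega))) h h2
  have h0 := h.nonneg (fun n : ℕ => by positivity)
  rw [← abs_of_nonneg h0] at hle
  rw [← bernoulli_eq_bernoulli'_of_ne_one (by omega)]
  rw [abs_div, abs_mul, abs_mul, abs_mul, abs_pow, abs_neg, abs_one, one_pow, one_mul,
    abs_of_pos (show (0 : ℝ) < 2 ^ (2 * k - 1) by positivity),
    abs_of_pos (show (0 : ℝ) < Real.pi ^ (2 * k) by positivity), Nat.abs_cast] at hle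
  have h3 : (2 : ℝ) ^ (2 * k) = 2 * 2 ^ (2 * k - 1) := by
    rw [← pow_succ']; congr 1; omega
  rw [mul_pow, h3]
  calc _ = 2 * (2 ^ (2 * k - 1) * Real.pi ^ (2 * k) * |((bernoulli (2 * k) : ℚ) : ℝ)|
        / ((2 * k).factorial : ℝ)) := by ring
    _ ≤ 2 * (Real.pi ^ 2 / 6) := by gcongr
    _ = _ := by ring

/-- For `|z| < 2π`, the series `Σ_{n} |B*_n| |z|^n / n!` converges (radius of convergence
of `z/(1 − e^{−z})` is `2π`). -/
theorem stmt5 (z : ℝ) (hz : |z| < 2 * Real.pi) :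
    Summable (fun n : ℕ => |((bernoulli' n : ℚ) : ℝ)| * |z| ^ n / (n.factorial : ℝ)) := by
  have hpi : 0 < 2 * Real.pi := by positivity
  have hg : Summable (fun n : ℕ => Real.pi ^ 2 / 3 * (|z| / (2 * Real.pi)) ^ n) :=
    (summable_geometric_of_lt_one (by positivity) ((div_lt_one hpi).2 hz)).mul_left _
  rw [← summable_nat_add_iff 2]
  refine Summable.of_nonneg_of_le (fun n => by positivity) (fun n => ?_)
    ((summable_nat_add_iff 2).2 hg)
  rcases Nat.even_or_odd' (n + 2) with ⟨k, hk | hk⟩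
  · rw [hk]
    have h := stmt5_aux k (by omega)
    calc _ = ((2 * Real.pi) ^ (2 * k) *
          (|((bernoulli' (2 * k) : ℚ) : ℝ)| / ((2 * k).factorial : ℝ))) *
            (|z| / (2 * Real.pi)) ^ (2 * k) := by
          rw [div_pow]; field_simp
      _ ≤ _ := by gcongr
  · rw [bernoulli'_eq_zero_of_odd ⟨k, hk⟩ (by omega)]
    simp only [Rat.cast_zero, abs_zero, zero_mul, zero_div]
    positivity
end

section
/- Let R and ε be real numbers with 0 ≤ R ≤ 1 and ε ≥ 0. Then for every natural number k: Σ_{j=0}^{k} (k!)² · j! · ((2k−j)!)^R / ( ((k−j)!)² · (j!)² · (k!)^{2R+2ε} ) ≥ (k!)^{1−R−2ε}. In particular, if R + 2ε < 1 the left-hand side tends to ∞ as k → ∞. -/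
open Real Filter

/-- The Heisenberg-algebra counterexample estimate: for `0 ≤ R ≤ 1`, `ε ≥ 0` and every `k`,
`Σ_{j=0}^{k} (k!)² j! ((2k−j)!)^R / (((k−j)!)² (j!)² (k!)^{2R+2ε}) ≥ (k!)^{1−R−2ε}`;
in particular, if `R + 2ε < 1` the left-hand side tends to `∞` as `k → ∞`. -/
theorem stmt7 (R ε : ℝ) (hR0 : 0 ≤ R) (hR1 : R ≤ 1) (hε : 0 ≤ ε) :
    (∀ k : ℕ,
      ∑ j ∈ Finset.range (k + 1),
        (k.factorial : ℝ) ^ 2 * (j.factorial : ℝ)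
          * ((2 * k - j).factorial : ℝ) ^ R
          / (((k - j).factorial : ℝ) ^ 2 * (j.factorial : ℝ) ^ 2
              * (k.factorial : ℝ) ^ (2 * R + 2 * ε))
        ≥ (k.factorial : ℝ) ^ (1 - R - 2 * ε))
    ∧ (R + 2 * ε < 1 →
        Tendsto (fun k : ℕ =>
          ∑ j ∈ Finset.range (k + 1),
            (k.factorial : ℝ) ^ 2 * (j.factorial : ℝ)
              * ((2 * k - j).factorial : ℝ) ^ R
              / (((k - j).factorial : ℝ) ^ 2 * (j.factorial : ℝ) ^ 2
                  * (k.factorial : ℝ) ^ (2 * R + 2 * ε)))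
          atTop atTop) := by
  have key : ∀ k : ℕ,
      ∑ j ∈ Finset.range (k + 1),
        (k.factorial : ℝ) ^ 2 * (j.factorial : ℝ)
          * ((2 * k - j).factorial : ℝ) ^ R
          / (((k - j).factorial : ℝ) ^ 2 * (j.factorial : ℝ) ^ 2
              * (k.factorial : ℝ) ^ (2 * R + 2 * ε))
        ≥ (k.factorial : ℝ) ^ (1 - R - 2 * ε) := by
    intro k
    have hk : (0 : ℝ) < (k.factorial : ℝ) := by exact_mod_cast k.factorial_pos
    have hle := Finset.single_le_sum (s := Finset.range (k + 1))
      (f := fun j : ℕ => (k.factorial : ℝ) ^ 2 * (j.factorial : ℝ)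
          * ((2 * k - j).factorial : ℝ) ^ R
          / (((k - j).factorial : ℝ) ^ 2 * (j.factorial : ℝ) ^ 2
              * (k.factorial : ℝ) ^ (2 * R + 2 * ε)))
      (fun j _ => by positivity) (Finset.self_mem_range_succ k)
    refine le_trans (le_of_eq ?_) hle
    have h2 : 2 * k - k = k := by omega
    have hp : (0 : ℝ) < (k.factorial : ℝ) ^ (2 * R + 2 * ε) := Real.rpow_pos_of_pos hk _
    have e : (k.factorial : ℝ) ^ (1 - R - 2 * ε) * (k.factorial : ℝ) ^ (2 * R + 2 * ε)
        = (k.factorial : ℝ) * (k.factorial : ℝ) ^ R := by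
      rw [← Real.rpow_add hk, ← Real.rpow_one_add' hk.le (by linarith)]
      congr 1
      ring
    simp only [h2, Nat.sub_self, Nat.factorial_zero, Nat.cast_one, one_pow, one_mul]
    rw [eq_div_iff (by positivity)]
    linear_combination (k.factorial : ℝ) ^ 2 * e
  refine ⟨key, fun h => ?_⟩
  refine tendsto_atTop_mono key ?_
  have hf : Tendsto (fun k : ℕ => (k.factorial : ℝ)) atTop atTop :=
    tendsto_natCast_atTop_atTop.comp factorial_tendsto_atTop
  exact (tendsto_rpow_atTop (by linarith : 0 < 1 - R - 2 * ε)).comp hf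
end

section
/- Let δ be a real number with 0 < δ ≤ 1 and let n, k, ℓ be natural numbers with n ≤ δ·(k+ℓ). Then (as real numbers) n! ≤ ((2e)^{k+ℓ} · k! · ℓ!)^δ. -/
/-- For `0 < δ ≤ 1` and `n ≤ δ(k+ℓ)` one has `n! ≤ ((2e)^{k+ℓ} k! ℓ!)^δ` as real numbers. -/
theorem stmt11 (δ : ℝ) (hδ0 : 0 < δ) (hδ1 : δ ≤ 1) (n k ℓ : ℕ)
    (h : (n : ℝ) ≤ δ * (k + ℓ)) :
    (n.factorial : ℝ)
      ≤ ((2 * Real.exp 1) ^ (k + ℓ) * (k.factorial : ℝ) * (ℓ.factorial : ℝ)) ^ δ := by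
  obtain ⟨m, hm⟩ : ∃ m, m = k + ℓ := ⟨_, rfl⟩
  have hmr : (m : ℝ) = k + ℓ := by rw [hm]; push_cast; rfl
  rw [← hmr] at h
  have hnm : n ≤ m := by
    have h0 : (0 : ℝ) ≤ m := Nat.cast_nonneg m
    have : (n : ℝ) ≤ m := by nlinarith
    exact_mod_cast this
  have h1 : (m : ℝ) ^ m ≤ Real.exp 1 ^ m * (m.factorial : ℝ) := by
    have := Real.pow_div_factorial_le_exp (m : ℝ) (Nat.cast_nonneg m : (0 : ℝ) ≤ m) m
    rw [div_le_iff₀ (by positivity)] at this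
    rwa [← Real.exp_nat_mul, mul_one]
  have h2 : (m.factorial : ℝ) ≤ 2 ^ m * ((k.factorial : ℝ) * (ℓ.factorial : ℝ)) := by
    have e : (k + ℓ).choose k * k.factorial * ℓ.factorial = (k + ℓ).factorial := by
      simpa using Nat.choose_mul_factorial_mul_factorial (Nat.le_add_right k ℓ)
    have c := Nat.choose_le_two_pow (k + ℓ) k
    have : m.factorial ≤ 2 ^ m * (k.factorial * ℓ.factorial) := by
      rw [hm, ← e, mul_assoc]
      exact Nat.mul_le_mul_right _ c
    exact_mod_cast this
  have h3 : (m : ℝ) ^ m ≤ (2 * Real.exp 1) ^ (k + ℓ) * (k.factorial : ℝ) * (ℓ.factorial : ℝ) := by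
    rw [← hm]
    calc (m : ℝ) ^ m ≤ Real.exp 1 ^ m * (m.factorial : ℝ) := h1
      _ ≤ Real.exp 1 ^ m * (2 ^ m * ((k.factorial : ℝ) * (ℓ.factorial : ℝ))) := by gcongr
      _ = _ := by rw [mul_pow]; ring
  refine le_trans ?_ (Real.rpow_le_rpow (by positivity) h3 hδ0.le)
  rcases Nat.eq_zero_or_pos m with h0 | hpos
  · have : n = 0 := by omega
    subst this
    simp [h0]
  · have hm1 : (1 : ℝ) ≤ m := by exact_mod_cast hpos
    calc (n.factorial : ℝ) ≤ (n : ℝ) ^ n := by exact_mod_cast Nat.factorial_le_pow n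
      _ ≤ (m : ℝ) ^ n := by gcongr
      _ = (m : ℝ) ^ (n : ℝ) := (Real.rpow_natCast _ _).symm
      _ ≤ (m : ℝ) ^ ((m : ℝ) * δ) := Real.rpow_le_rpow_of_exponent_le hm1 (by linarith)
      _ = ((m : ℝ) ^ m) ^ δ := by rw [Real.rpow_mul (by positivity), Real.rpow_natCast]
end

section
/- Let R be a real number with 1/2 ≤ R ≤ 1, let a, b ≥ 0 be real numbers, and let r, s be natural numbers. Then Σ_{n=0}^{min(r,s)} a^n · b^n · ( r! · s! / ((r−n)! · (s−n)! · n!) ) · ((r+s−2n)!)^R / ( (r!)^R · (s!)^R ) ≤ (8·(a+1)·(b+1))^{r+s}. -/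
theorem aux_term (R : ℝ) (hR1 : 1 / 2 ≤ R) (hR2 : R ≤ 1) (p q n : ℕ) :
    (n.factorial : ℝ) * ((p + q).factorial : ℝ) ^ R
      / (((p + n).factorial : ℝ) ^ R * ((q + n).factorial : ℝ) ^ R) ≤ 2 ^ (p + n + (q + n)) := by
  have hn : (1 : ℝ) ≤ n.factorial := by exact_mod_cast n.factorial_pos
  have hp : (0 : ℝ) < (p + n).factorial := by exact_mod_cast (p + n).factorial_pos
  have hq : (0 : ℝ) < (q + n).factorial := by exact_mod_cast (q + n).factorial_pos
  rw [← Real.mul_rpow hp.le hq.le, div_le_iff₀ (by positivity)]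
  have key : (n.factorial : ℝ) ^ 2 * (p + q).factorial
      ≤ 2 ^ (p + n + (q + n)) * ((p + n).factorial * (q + n).factorial) := by
    have h1 : (p + q).factorial = (p + q).choose q * p.factorial * q.factorial :=
      (Nat.add_choose_mul_factorial_mul_factorial p q).symm
    have h2 : (p + q).choose q ≤ 2 ^ (p + n + (q + n)) :=
      (Nat.choose_le_two_pow _ _).trans (Nat.pow_le_pow_right (by norm_num) (by omega))
    have h3 : p.factorial * n.factorial ≤ (p + n).factorial :=
      Nat.le_of_dvd (Nat.factorial_pos _) (Nat.factorial_mul_factorial_dvd_factorial_add p n)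
    have h4 : q.factorial * n.factorial ≤ (q + n).factorial :=
      Nat.le_of_dvd (Nat.factorial_pos _) (Nat.factorial_mul_factorial_dvd_factorial_add q n)
    have h5 := Nat.mul_le_mul h2 (Nat.mul_le_mul h3 h4)
    have h6 : n.factorial ^ 2 * (p + q).factorial
      ≤ 2 ^ (p + n + (q + n)) * ((p + n).factorial * (q + n).factorial) := by
      refine le_trans (le_of_eq ?_) h5
      rw [h1]; ring
    exact_mod_cast h6
  have hnR : (n.factorial : ℝ) ≤ ((n.factorial : ℝ) ^ 2) ^ R := by
    rw [← Real.rpow_natCast, ← Real.rpow_mul (by positivity)]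
    calc (n.factorial : ℝ) = (n.factorial : ℝ) ^ (1 : ℝ) := (Real.rpow_one _).symm
      _ ≤ _ := Real.rpow_le_rpow_of_exponent_le hn (by push_cast; linarith)
  have h2R : ((2 : ℝ) ^ (p + n + (q + n))) ^ R ≤ 2 ^ (p + n + (q + n)) := by
    calc ((2 : ℝ) ^ (p + n + (q + n))) ^ R ≤ ((2 : ℝ) ^ (p + n + (q + n))) ^ (1 : ℝ) :=
          Real.rpow_le_rpow_of_exponent_le (one_le_pow₀ (by norm_num)) hR2
      _ = _ := Real.rpow_one _
  calc (n.factorial : ℝ) * ((p + q).factorial : ℝ) ^ R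
      ≤ ((n.factorial : ℝ) ^ 2) ^ R * ((p + q).factorial : ℝ) ^ R := by gcongr
    _ = ((n.factorial : ℝ) ^ 2 * (p + q).factorial) ^ R :=
        (Real.mul_rpow (by positivity) (by positivity)).symm
    _ ≤ (2 ^ (p + n + (q + n)) * (((p + n).factorial : ℝ) * (q + n).factorial)) ^ R :=
        Real.rpow_le_rpow (by positivity) key (by linarith)
    _ = ((2 : ℝ) ^ (p + n + (q + n))) ^ R * (((p + n).factorial : ℝ) * (q + n).factorial) ^ R :=
        Real.mul_rpow (by positivity) (by positivity)
    _ ≤ _ := by gcongr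

theorem aux_binom (a : ℝ) (r : ℕ) :
    ∑ n ∈ Finset.range (r + 1), a ^ n * (r.choose n : ℝ) = (a + 1) ^ r := by
  rw [add_pow]; simp

/-- The numerical core of the continuity of the Gutt star product in the Weyl algebra
for `R ≥ 1/2`:
`Σ_{n=0}^{min(r,s)} a^n b^n (r!s!/((r−n)!(s−n)!n!)) ((r+s−2n)!)^R / ((r!)^R (s!)^R)
  ≤ (8(a+1)(b+1))^{r+s}`. -/
theorem stmt12 (R : ℝ) (hR1 : 1 / 2 ≤ R) (hR2 : R ≤ 1) (a b : ℝ) (ha : 0 ≤ a) (hb : 0 ≤ b)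
    (r s : ℕ) :
    ∑ n ∈ Finset.range (min r s + 1),
      a ^ n * b ^ n
        * ((r.factorial : ℝ) * (s.factorial : ℝ)
            / (((r - n).factorial : ℝ) * ((s - n).factorial : ℝ) * (n.factorial : ℝ)))
        * ((r + s - 2 * n).factorial : ℝ) ^ R
        / ((r.factorial : ℝ) ^ R * (s.factorial : ℝ) ^ R)
      ≤ (8 * (a + 1) * (b + 1)) ^ (r + s) := by

  have hterm : ∀ n ∈ Finset.range (min r s + 1),
      a ^ n * b ^ n
        * ((r.factorial : ℝ) * (s.factorial : ℝ)
            / (((r - n).factorial : ℝ) * ((s - n).factorial : ℝ) * (n.factorial : ℝ)))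
        * ((r + s - 2 * n).factorial : ℝ) ^ R
        / ((r.factorial : ℝ) ^ R * (s.factorial : ℝ) ^ R)
      ≤ (a ^ n * (r.choose n : ℝ)) * ((b + 1) ^ s * 2 ^ (r + s)) := by
    intro n hn
    rw [Finset.mem_range] at hn
    have hnr : n ≤ r := by omega
    have hns : n ≤ s := by omega
    have hbs : b ^ n * (s.choose n : ℝ) ≤ (b + 1) ^ s := by
      rw [← aux_binom b s]
      exact Finset.single_le_sum (f := fun n => b ^ n * (s.choose n : ℝ))
        (fun i _ => by positivity) (Finset.mem_range.2 (by omega))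
    have h := aux_term R hR1 hR2 (r - n) (s - n) n
    have e : r - n + (s - n) = r + s - 2 * n := by omega
    rw [e, Nat.sub_add_cancel hnr, Nat.sub_add_cancel hns] at h
    have hc : (r.factorial : ℝ) * (s.factorial : ℝ)
            / (((r - n).factorial : ℝ) * ((s - n).factorial : ℝ) * (n.factorial : ℝ))
        = r.choose n * s.choose n * n.factorial := by
      rw [Nat.cast_choose ℝ hnr, Nat.cast_choose ℝ hns]
      field_simp
    rw [hc]
    calc _ = (a ^ n * (r.choose n : ℝ)) * ((b ^ n * (s.choose n : ℝ)) *
          ((n.factorial : ℝ) * ((r + s - 2 * n).factorial : ℝ) ^ R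
            / ((r.factorial : ℝ) ^ R * (s.factorial : ℝ) ^ R))) := by ring
      _ ≤ _ := by gcongr
  refine (Finset.sum_le_sum hterm).trans ?_
  rw [← Finset.sum_mul]
  have hsum : ∑ n ∈ Finset.range (min r s + 1), a ^ n * (r.choose n : ℝ) ≤ (a + 1) ^ r := by
    rw [← aux_binom a r]
    exact Finset.sum_le_sum_of_subset_of_nonneg
      (Finset.range_mono (by omega)) (fun i _ _ => by positivity)
  have ha' : (a + 1) ^ r ≤ (a + 1) ^ (r + s) := pow_le_pow_right₀ (by linarith) (by omega)
  have hb' : (b + 1) ^ s ≤ (b + 1) ^ (r + s) := pow_le_pow_right₀ (by linarith) (by omega)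
  have h28 : (2 : ℝ) ^ (r + s) ≤ 8 ^ (r + s) := by gcongr; norm_num
  calc _ ≤ (a + 1) ^ (r + s) * ((b + 1) ^ (r + s) * 8 ^ (r + s)) := by
        gcongr
        exact hsum.trans ha'
    _ = _ := by rw [mul_pow, mul_pow]; ring
end

section
/- Let δ be a real number with 0 < δ ≤ 1 and let ℓ, n be natural numbers with ℓ ≤ δ·n. Then (as real numbers) ℓ! ≤ (e^n · n!)^δ. -/
/-- For `0 < δ ≤ 1` and `ℓ ≤ δ·n` one has `ℓ! ≤ (e^n · n!)^δ` as real numbers. -/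
theorem stmt14 (δ : ℝ) (hδ0 : 0 < δ) (hδ1 : δ ≤ 1) (ℓ n : ℕ)
    (h : (ℓ : ℝ) ≤ δ * n) :
    (ℓ.factorial : ℝ) ≤ (Real.exp 1 ^ n * (n.factorial : ℝ)) ^ δ := by
  have hn0 : (0 : ℝ) ≤ n := Nat.cast_nonneg n
  have hln : ℓ ≤ n := by
    have : (ℓ : ℝ) ≤ n := by nlinarith
    exact_mod_cast this
  have h1 : (n : ℝ) ^ n ≤ Real.exp 1 ^ n * (n.factorial : ℝ) := by
    have h2 := Real.pow_div_factorial_le_exp (n : ℝ) hn0 n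
    rw [div_le_iff₀ (by positivity)] at h2
    rwa [← Real.exp_nat_mul, mul_one]
  have h3 : ((n : ℝ) ^ n) ^ δ ≤ (Real.exp 1 ^ n * (n.factorial : ℝ)) ^ δ :=
    Real.rpow_le_rpow (by positivity) h1 hδ0.le
  refine le_trans ?_ h3
  rcases Nat.eq_zero_or_pos n with rfl | hn
  · have : ℓ = 0 := by omega
    subst this
    simp
  · have h4 : (ℓ.factorial : ℝ) ≤ (n : ℝ) ^ ℓ := by
      exact_mod_cast (Nat.factorial_le_pow ℓ).trans (Nat.pow_le_pow_left hln ℓ)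
    rw [← Real.rpow_natCast, ← Real.rpow_mul hn0]
    refine h4.trans ?_
    rw [← Real.rpow_natCast]
    apply Real.rpow_le_rpow_of_exponent_le
    · exact_mod_cast hn
    · linarith [mul_comm δ (n : ℝ)]
end

section
/- Let R ≥ 1 be a real number, z ≥ 0 a real number, and n ≥ 1 a natural number. Then (n!)^R + Σ_{ℓ=1}^{n−1} ((n−ℓ)!)^R · z^ℓ · n^ℓ · C(n+ℓ−2, ℓ−1) ≤ (n!)^R · (8·e·(z+1))^n. -/
/-- The numerical core of the estimate
`p_R(ξ₁ ⋆_z ⋯ ⋆_z ξₙ) ≤ (8e(|z|+1))^n n!^R q(ξ₁)⋯q(ξₙ)`: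
for `R ≥ 1`, `z ≥ 0` and `n ≥ 1`,
`(n!)^R + Σ_{ℓ=1}^{n−1} ((n−ℓ)!)^R z^ℓ n^ℓ C(n+ℓ−2, ℓ−1) ≤ (n!)^R (8e(z+1))^n`. -/
theorem stmt16 (R : ℝ) (hR : 1 ≤ R) (z : ℝ) (hz : 0 ≤ z) (n : ℕ) (hn : 1 ≤ n) :
    (n.factorial : ℝ) ^ R
      + ∑ ℓ ∈ Finset.Icc 1 (n - 1),
          ((n - ℓ).factorial : ℝ) ^ R * z ^ ℓ * (n : ℝ) ^ ℓ
            * ((n + ℓ - 2).choose (ℓ - 1) : ℝ)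
      ≤ (n.factorial : ℝ) ^ R * (8 * Real.exp 1 * (z + 1)) ^ n := by
  have hb : (0:ℝ) < (n.factorial : ℝ) := by exact_mod_cast n.factorial_pos
  set B : ℝ := (n.factorial : ℝ) ^ R with hB
  have hB0 : 0 < B := Real.rpow_pos_of_pos hb R
  have he : (1:ℝ) ≤ Real.exp 1 := Real.one_le_exp (by norm_num)
  set M : ℝ := (4 * Real.exp 1 * (z + 1)) ^ n with hM
  have hM1 : 1 ≤ M := one_le_pow₀ (by nlinarith)
  have hterm : ∀ ℓ ∈ Finset.Icc 1 (n - 1),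
      ((n - ℓ).factorial : ℝ) ^ R * z ^ ℓ * (n : ℝ) ^ ℓ
            * ((n + ℓ - 2).choose (ℓ - 1) : ℝ) ≤ B * M := by
    intro ℓ hℓ
    rw [Finset.mem_Icc] at hℓ
    have hle : ℓ ≤ n := by omega
    have ha : (0:ℝ) < ((n - ℓ).factorial : ℝ) := by exact_mod_cast (n - ℓ).factorial_pos
    have hab : ((n - ℓ).factorial : ℝ) ≤ (n.factorial : ℝ) := by
      exact_mod_cast Nat.factorial_le (Nat.sub_le n ℓ)
    have h1 : ((n - ℓ).factorial : ℝ) * (n : ℝ) ^ ℓ ≤ (n.factorial : ℝ) * Real.exp 1 ^ n := by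
      have h2 : ((n - ℓ).factorial : ℝ) ≤ (n : ℝ) ^ (n - ℓ) := by
        have h3 : (n - ℓ).factorial ≤ n ^ (n - ℓ) :=
          (Nat.factorial_le_pow (n - ℓ)).trans (Nat.pow_le_pow_left (Nat.sub_le n ℓ) _)
        exact_mod_cast h3
      have h4 : (n : ℝ) ^ n / (n.factorial : ℝ) ≤ Real.exp n :=
        Real.pow_div_factorial_le_exp (n : ℝ) (Nat.cast_nonneg n) n
      rw [div_le_iff₀ hb] at h4
      calc ((n - ℓ).factorial : ℝ) * (n : ℝ) ^ ℓ ≤ (n : ℝ) ^ (n - ℓ) * (n : ℝ) ^ ℓ := by gcongr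
        _ = (n : ℝ) ^ n := by rw [← pow_add, Nat.sub_add_cancel hle]
        _ ≤ _ := h4
        _ = _ := by rw [← Real.exp_nat_mul, mul_one, mul_comm]
    have h5 : ((n - ℓ).factorial : ℝ) ^ R * (n : ℝ) ^ ℓ ≤ B * Real.exp 1 ^ n := by
      have e1 : ∀ x : ℝ, 0 < x → x ^ R = x ^ (R - 1) * x := by
        intro x hx
        rw [Real.rpow_sub_one hx.ne', div_mul_cancel₀ _ hx.ne']
      rw [hB, e1 _ ha, e1 _ hb, mul_assoc, mul_assoc]
      have h6 : ((n - ℓ).factorial : ℝ) ^ (R - 1) ≤ (n.factorial : ℝ) ^ (R - 1) :=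
        Real.rpow_le_rpow ha.le hab (by linarith)
      exact mul_le_mul h6 h1 (by positivity) (by positivity)
    have h7 : ((n + ℓ - 2).choose (ℓ - 1) : ℝ) ≤ 4 ^ n := by
      have h8 : (n + ℓ - 2).choose (ℓ - 1) ≤ 4 ^ n := by
        calc _ ≤ 2 ^ (n + ℓ - 2) := Nat.choose_le_two_pow _ _
          _ ≤ 2 ^ (2 * n) := Nat.pow_le_pow_right (by norm_num) (by omega)
          _ = 4 ^ n := by rw [pow_mul]; norm_num
      exact_mod_cast h8
    have h9 : z ^ ℓ ≤ (z + 1) ^ n :=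
      (pow_le_pow_left₀ hz (by linarith) ℓ).trans (pow_le_pow_right₀ (by linarith) hle)
    calc _ = (((n - ℓ).factorial : ℝ) ^ R * (n : ℝ) ^ ℓ) * z ^ ℓ
            * ((n + ℓ - 2).choose (ℓ - 1) : ℝ) := by ring
      _ ≤ (B * Real.exp 1 ^ n) * (z + 1) ^ n * 4 ^ n := by gcongr
      _ = B * M := by rw [hM, mul_pow, mul_pow]; ring
  have hsum := Finset.sum_le_card_nsmul _ _ _ hterm
  rw [Nat.card_Icc, nsmul_eq_mul] at hsum
  have hc : ((n - 1 + 1 - 1 : ℕ) : ℝ) = n - 1 := by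
    rw [Nat.add_sub_cancel, Nat.cast_sub hn, Nat.cast_one]
  rw [hc] at hsum
  have hn2 : (n : ℝ) ≤ 2 ^ n := by exact_mod_cast Nat.lt_two_pow_self.le
  have hBM : B ≤ B * M := le_mul_of_one_le_right hB0.le hM1
  have hfin : (8 * Real.exp 1 * (z + 1)) ^ n = 2 ^ n * M := by
    rw [hM, ← mul_pow]; ring
  rw [hfin]
  calc _ ≤ B * M + ((n : ℝ) - 1) * (B * M) := add_le_add hBM hsum
    _ = n * (B * M) := by ring
    _ ≤ 2 ^ n * (B * M) := by gcongr
    _ = _ := by ring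
end
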